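/- Fix a sequence length L and suppose the state transitions are scalar multiples of the identity: A_t = a_t I with a_t ∈ ℝ, and let B_t, C_t ∈ ℝ^N for 0 ≤ t ≤ L−1. Then the SSM matrix M, defined by M_{ij} = C_iᵀ (A_i ⋯ A_{j+1}) B_j for i ≥ j and 0 otherwise, factors entrywise as M_{ij} = (L_M)_{ij} · (C_iᵀ B_j) for i ≥ j and M_{ij} = 0 for i < j, where (L_M)_{ij} = a_i a_{i−1} ⋯ a_{j+1} (equal to 1 when j = i). Equivalently, M = L_M ∘ (C̃ B̃ᵀ) on and below the diagonal, where C̃ and B̃ are the L × N matrices with rows C_tᵀ and B_tᵀ. -/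

import Mathlib

open Matrix
open scoped Matrix

/-- The ordered matrix product `A_i * A_{i-1} * ⋯ * A_{j+1}`, equal to the identity
matrix when `j = i` (more generally when `i ≤ j`). -/
def transitionProd {N : ℕ} (A : ℕ → Matrix (Fin N) (Fin N) ℝ) (i j : ℕ) :
    Matrix (Fin N) (Fin N) ℝ :=
  (((List.range' (j + 1) (i - j)).reverse).map A).prod

/-- The scalar product `a_i * a_{i-1} * ⋯ * a_{j+1}`, equal to `1` when `j = i`
(more generally when `i ≤ j`). -/
def scalarProd (a : ℕ → ℝ) (i j : ℕ) : ℝ :=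
  ((List.range' (j + 1) (i - j)).map a).prod

theorem list_prod_smul_one {N : ℕ} (a : ℕ → ℝ) (l : List ℕ) :
    (l.map (fun t => a t • (1 : Matrix (Fin N) (Fin N) ℝ))).prod
      = (l.map a).prod • (1 : Matrix (Fin N) (Fin N) ℝ) := by
  induction l with
  | nil => simp
  | cons x l ih =>
    rw [List.map_cons, List.prod_cons, ih, List.map_cons, List.prod_cons]
    simp [smul_smul, mul_comm]

theorem transitionProd_smul_one {N : ℕ} (a : ℕ → ℝ) (i j : ℕ) :
    transitionProd (fun t => a t • (1 : Matrix (Fin N) (Fin N) ℝ)) i j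
      = scalarProd a i j • (1 : Matrix (Fin N) (Fin N) ℝ) := by
  unfold transitionProd scalarProd
  rw [list_prod_smul_one, List.map_reverse, List.prod_reverse]

/-- When the state transitions are scalar multiples of the identity, `A_t = a_t I`,
the SSM matrix `M` (with `M i j = C_iᵀ (A_i ⋯ A_{j+1}) B_j` for `i ≥ j` and `0`
otherwise) factors entrywise as `M i j = (L_M) i j * (C_iᵀ B_j)` for `i ≥ j` and
`M i j = 0` for `i < j`, where `(L_M) i j = a_i ⋯ a_{j+1}` (equal to `1` when `j = i`).
Equivalently, `M = L_M ⊙ (C̃ B̃ᵀ)` on and below the diagonal, where `C̃, B̃` are the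
`L × N` matrices with rows `C_tᵀ` and `B_tᵀ`. -/
theorem ssm_scalar_mask_factorization {L N : ℕ}
    (a : ℕ → ℝ) (B C : ℕ → Fin N → ℝ)
    (M LM : Matrix (Fin L) (Fin L) ℝ)
    (hM : ∀ i j : Fin L,
      M i j = if (j : ℕ) ≤ (i : ℕ)
        then C i ⬝ᵥ (transitionProd (fun t => a t • (1 : Matrix (Fin N) (Fin N) ℝ)) i j *ᵥ B j)
        else 0)
    (hLM : ∀ i j : Fin L, LM i j = scalarProd a i j)
    (Ctilde Btilde : Matrix (Fin L) (Fin N) ℝ)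
    (hCt : ∀ (t : Fin L) (k : Fin N), Ctilde t k = C t k)
    (hBt : ∀ (t : Fin L) (k : Fin N), Btilde t k = B t k) :
    (∀ i j : Fin L, M i j = if (j : ℕ) ≤ (i : ℕ) then LM i j * (C i ⬝ᵥ B j) else 0) ∧
      (∀ i j : Fin L, (j : ℕ) ≤ (i : ℕ) → M i j = (LM ⊙ (Ctilde * Btildeᵀ)) i j) := by
  have h1 : ∀ i j : Fin L,
      M i j = if (j : ℕ) ≤ (i : ℕ) then LM i j * (C i ⬝ᵥ B j) else 0 := by
    intro i j
    rw [hM, hLM, transitionProd_smul_one, smul_mulVec, one_mulVec, dotProduct_smul, smul_eq_mul]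
  refine ⟨h1, fun i j hij => ?_⟩
  rw [h1, if_pos hij]
  simp [Matrix.mul_apply, dotProduct, hCt, hBt]
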